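/- Let (A, φ) be a *-probability space with free cumulants (κ_n), and let (A_i)_{i∈I} be unital *-subalgebras of A that are freely independent in the cumulant sense. Let a = a_1 ⋯ a_k, where for all 1 ≤ u ≤ k, a_u ∈ A_{i_u} with φ(a_u) = 0, and i_u ≠ i_{u+1} for 1 ≤ u ≤ k−1. Then κ_2(a*, a) = ∏_{u=1}^{k} κ_2(a_u*, a_u), and this quantity is a nonnegative real number. -/

import Mathlib

open scoped BigOperators ComplexOrder

/-- A partition of `{0, …, n-1}` is non-crossing if whenever `p < q < r < s`,
`p, r` lie in a block `B` and `q, s` lie in a block `C`, then `B = C`. -/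
def IsNonCrossing {n : ℕ} (π : Finpartition (Finset.univ : Finset (Fin n))) : Prop :=
  ∀ (p q r s : Fin n), p < q → q < r → r < s →
    ∀ B ∈ π.parts, ∀ C ∈ π.parts, p ∈ B → r ∈ B → q ∈ C → s ∈ C → B = C

/-- The multiplicative extension `κ_π[a_1, …, a_n] = ∏_{V ∈ π} κ_{|V|}(a_{i_1}, …, a_{i_s})`
of a family of multilinear functionals `κ_n : A^n → ℂ`, where each block
`V = {i_1 < ⋯ < i_s}` is listed in increasing order. -/
noncomputable def partCum {A : Type*} [Ring A] [Algebra ℂ A]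
    (κ : ∀ n, MultilinearMap ℂ (fun _ : Fin n => A) ℂ)
    {n : ℕ} (π : Finpartition (Finset.univ : Finset (Fin n))) (a : Fin n → A) : ℂ :=
  ∏ V ∈ π.parts, κ (V.sort (· ≤ ·)).length (fun j => a ((V.sort (· ≤ ·)).get j))

open Classical in
/-- The moment–cumulant relation: `φ(a_1 ⋯ a_n) = Σ_{π ∈ NC(n)} κ_π[a_1, …, a_n]`
for all `n ≥ 1`; it characterizes the free cumulants of `(A, φ)`. -/
def MomentCumulant {A : Type*} [Ring A] [Algebra ℂ A] (φ : A →ₗ[ℂ] ℂ)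
    (κ : ∀ n, MultilinearMap ℂ (fun _ : Fin n => A) ℂ) : Prop :=
  ∀ (n : ℕ), 0 < n → ∀ a : Fin n → A,
    φ (List.ofFn a).prod =
      ∑ π ∈ Finset.univ.filter
          (fun π : Finpartition (Finset.univ : Finset (Fin n)) => IsNonCrossing π),
        partCum κ π a
/-- Free independence, in the cumulant sense, of a family of subsets `S i` of `A`:
all mixed free cumulants vanish. -/
def FreeIndepCumulant {A : Type*} [Ring A] [Algebra ℂ A] {ι : Type*}
    (S : ι → Set A)
    (κ : ∀ n, MultilinearMap ℂ (fun _ : Fin n => A) ℂ) : Prop :=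
  ∀ (n : ℕ), 2 ≤ n → ∀ (a : Fin n → A) (idx : Fin n → ι),
    (∀ j, a j ∈ S (idx j)) → (∃ j j' : Fin n, idx j ≠ idx j') →
    κ n a = 0

/-!
A non-crossing partition has a singleton block or a block with two consecutive elements. In the
moment–cumulant expansion of a word of centered letters whose neighbours lie in different free
subalgebras, the former contributes a vanishing mean and the latter a vanishing mixed cumulant, so
`φ` is zero on such words. Now let `b_k ⋯ b_1` and `a_1 ⋯ a_k` be two such words, with `b_u` and
`a_u` in the same subalgebra. Splitting `b_1 a_1 = φ(b_1 a_1) 1 + c` with `c` centered, the word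
`b_k ⋯ b_2 c a_2 ⋯ a_k` is again of this kind, whence `φ(b_k ⋯ b_1 a_1 ⋯ a_k) = ∏ φ(b_u a_u)` by
induction. On centered arguments `κ_2(x, y) = φ(x y)`, and the theorem is the case `b_u = a_u*`.
-/

section NonCrossing

theorem exists_mem_ne_of_singleton_notMem_parts {α : Type*} [DecidableEq α] {s : Finset α}
    {π : Finpartition s} {u : α} (hus : u ∈ s) (hu : {u} ∉ π.parts) :
    ∃ B ∈ π.parts, u ∈ B ∧ ∃ v ∈ B, v ≠ u := by
  obtain ⟨B, hB, huB⟩ := π.exists_mem hus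
  refine ⟨B, hB, huB, ?_⟩
  by_contra! hsub
  exact hu (Finset.eq_singleton_iff_unique_mem.2 ⟨huB, hsub⟩ ▸ hB)

variable {n : ℕ} {π : Finpartition (Finset.univ : Finset (Fin n))}

theorem IsNonCrossing.subset_Ioo (hπ : IsNonCrossing π) {B C : Finset (Fin n)}
    (hB : B ∈ π.parts) (hC : C ∈ π.parts) (hBC : B ≠ C) {p q r : Fin n}
    (hp : p ∈ B) (hq : q ∈ B) (hr : r ∈ C) (hpr : p < r) (hrq : r < q) :
    C ⊆ Finset.Ioo p q := by
  intro x hx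
  have hdisj : ∀ y ∈ B, x ≠ y := fun y hy hxy =>
    hBC (π.eq_of_mem_parts hB hC hy (hxy ▸ hx))
  refine Finset.mem_Ioo.2 ⟨?_, ?_⟩
  · by_contra! hxp
    exact hBC (hπ x p r q (hxp.lt_of_ne (hdisj p hp)) hpr hrq C hC B hB hx hr hp hq).symm
  · by_contra! hqx
    exact hBC (hπ p r q x hpr hrq (hqx.lt_of_ne (hdisj q hq).symm) B hB C hC hp hq hr hx)

-- Descent on `q - p`: the block of `p + 1` is either `B` itself or nested inside `(p, q)`.
theorem IsNonCrossing.exists_singleton_or_succ_of_lt (hπ : IsNonCrossing π)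
    {B : Finset (Fin n)} (hB : B ∈ π.parts) {p q : Fin n} (hp : p ∈ B) (hq : q ∈ B)
    (hpq : p < q) :
    (∃ u : Fin n, {u} ∈ π.parts) ∨
      ∃ C ∈ π.parts, ∃ u v : Fin n, (u : ℕ) + 1 = v ∧ u ∈ C ∧ v ∈ C := by
  by_cases hsucc : (p : ℕ) + 1 = q
  · exact .inr ⟨B, hB, p, q, hsucc, hp, hq⟩
  let r : Fin n := ⟨p + 1, by omega⟩
  have hpr : p < r := Fin.lt_def.2 (Nat.lt_succ_self p)
  have hrq : r < q := Fin.lt_def.2 (by simp only [r]; omega)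
  by_cases hr : {r} ∈ π.parts
  · exact .inl ⟨r, hr⟩
  obtain ⟨C, hC, hrC, x, hx, hxr⟩ :=
    exists_mem_ne_of_singleton_notMem_parts (Finset.mem_univ r) hr
  by_cases hBC : B = C
  · exact .inr ⟨B, hB, p, r, rfl, hp, hBC ▸ hrC⟩
  have hxpq := Finset.mem_Ioo.1 (hπ.subset_Ioo hB hC hBC hp hq hrC hpr hrq hx)
  have hrx : r < x := lt_of_le_of_ne (Fin.le_def.2 (Nat.succ_le_of_lt hxpq.1)) hxr.symm
  exact hπ.exists_singleton_or_succ_of_lt hC hrC hx hrx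
termination_by (q : ℕ) - p
decreasing_by omega

theorem IsNonCrossing.exists_singleton_or_succ (hπ : IsNonCrossing π) (hn : 0 < n) :
    (∃ u : Fin n, {u} ∈ π.parts) ∨
      ∃ C ∈ π.parts, ∃ u v : Fin n, (u : ℕ) + 1 = v ∧ u ∈ C ∧ v ∈ C := by
  by_cases h0 : {⟨0, hn⟩} ∈ π.parts
  · exact .inl ⟨_, h0⟩
  obtain ⟨B, hB, h0B, x, hx, hx0⟩ :=
    exists_mem_ne_of_singleton_notMem_parts (Finset.mem_univ _) h0
  exact hπ.exists_singleton_or_succ_of_lt hB h0B hx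
    (lt_of_le_of_ne (Fin.le_def.2 (Nat.zero_le x)) hx0.symm)

theorem isNonCrossing_of_lt_four (hn : n < 4) : IsNonCrossing π := by
  intro p q r s hpq hqr hrs
  omega

end NonCrossing

section Cumulants

variable {A : Type*} [Ring A] [Algebra ℂ A]

/-- The factor `κ_{|V|}(a_{i_1}, …, a_{i_s})` that a block `V = {i_1 < ⋯ < i_s}` contributes to
`partCum κ π a`. -/
noncomputable def blockCum (κ : ∀ n, MultilinearMap ℂ (fun _ : Fin n => A) ℂ) {n : ℕ}
    (a : Fin n → A) (V : Finset (Fin n)) : ℂ :=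
  κ (V.sort (· ≤ ·)).length (fun j => a ((V.sort (· ≤ ·)).get j))

variable {κ : ∀ n, MultilinearMap ℂ (fun _ : Fin n => A) ℂ}

theorem partCum_eq_prod_blockCum {n : ℕ} (π : Finpartition (Finset.univ : Finset (Fin n)))
    (a : Fin n → A) : partCum κ π a = ∏ V ∈ π.parts, blockCum κ a V :=
  rfl

theorem blockCum_eq_of_sort_eq {m n : ℕ} (a : Fin n → A) {V : Finset (Fin n)}
    {e : Fin m → Fin n} (hV : V.sort (· ≤ ·) = List.ofFn e) :
    blockCum κ a V = κ m (a ∘ e) := by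
  have kappa_cast : ∀ {k : ℕ} (h : k = m), κ k (a ∘ e ∘ Fin.cast h) = κ m (a ∘ e) := by
    rintro k rfl
    rfl
  rw [blockCum, hV, ← kappa_cast (List.length_ofFn (f := e))]
  congr 1
  ext j
  simp only [List.get_ofFn, Function.comp_apply]

theorem blockCum_univ {n : ℕ} (a : Fin n → A) : blockCum κ a Finset.univ = κ n a :=
  blockCum_eq_of_sort_eq a (e := id) (by rw [Fin.sort_univ, List.ofFn_id])

theorem blockCum_singleton {n : ℕ} (a : Fin n → A) (u : Fin n) :
    blockCum κ a {u} = κ 1 ![a u] := by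
  rw [blockCum_eq_of_sort_eq a (e := ![u]) (by simp)]
  congr 1
  ext j
  simp [Subsingleton.elim j 0]

theorem partCum_top {n : ℕ} (hn : 0 < n) (a : Fin n → A) : partCum κ ⊤ a = κ n a := by
  have hne : (Finset.univ : Finset (Fin n)) ≠ ⊥ :=
    Finset.nonempty_iff_ne_empty.1 ⟨⟨0, hn⟩, Finset.mem_univ _⟩
  have hparts : (⊤ : Finpartition (Finset.univ : Finset (Fin n))).parts = {Finset.univ} :=
    (Finset.Nonempty.subset_singleton_iff (Finpartition.parts_nonempty _ hne)).1
      (Finpartition.parts_top_subset _)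
  rw [partCum_eq_prod_blockCum, hparts, Finset.prod_singleton, blockCum_univ]

theorem partCum_bot {n : ℕ} (a : Fin n → A) : partCum κ ⊥ a = ∏ u, κ 1 ![a u] := by
  simp [partCum_eq_prod_blockCum, Finpartition.parts_bot, blockCum_singleton]

theorem FreeIndepCumulant.blockCum_eq_zero {ι : Type*} {S : ι → Set A}
    (hfree : FreeIndepCumulant S κ) {n : ℕ} {a : Fin n → A} {i : Fin n → ι}
    (ha : ∀ u, a u ∈ S (i u)) {V : Finset (Fin n)} {u v : Fin n} (hu : u ∈ V) (hv : v ∈ V)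
    (huv : i u ≠ i v) : blockCum κ a V = 0 := by
  obtain ⟨j, hj⟩ := List.get_of_mem ((Finset.mem_sort (· ≤ ·)).2 hu)
  obtain ⟨j', hj'⟩ := List.get_of_mem ((Finset.mem_sort (· ≤ ·)).2 hv)
  refine hfree _ ?_ _ (fun j => i ((V.sort (· ≤ ·)).get j)) (fun j => ha _)
    ⟨j, j', by simpa only [hj, hj'] using huv⟩
  rw [Finset.length_sort]
  exact Finset.one_lt_card.2 ⟨u, hu, v, hv, ne_of_apply_ne i huv⟩

variable {φ : A →ₗ[ℂ] ℂ}

theorem MomentCumulant.map_prod_eq_sum_partCum_of_lt_four (hκ : MomentCumulant φ κ) {n : ℕ}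
    (hn : 0 < n) (hn4 : n < 4) (a : Fin n → A) : φ (List.ofFn a).prod = ∑ π, partCum κ π a := by
  classical
  rw [hκ n hn, Finset.filter_true_of_mem fun π _ => isNonCrossing_of_lt_four hn4]

theorem MomentCumulant.kappa_one (hκ : MomentCumulant φ κ) (x : A) : κ 1 ![x] = φ x := by
  have huniv : (Finset.univ : Finset (Finpartition (Finset.univ : Finset (Fin 1)))) = {⊤} := by
    decide
  have hsum := hκ.map_prod_eq_sum_partCum_of_lt_four one_pos (by norm_num) ![x]
  rw [huniv, Finset.sum_singleton, partCum_top one_pos] at hsum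
  simpa using hsum.symm

theorem MomentCumulant.kappa_two (hκ : MomentCumulant φ κ) (x y : A) :
    κ 2 ![x, y] = φ (x * y) - φ x * φ y := by
  have huniv : (Finset.univ : Finset (Finpartition (Finset.univ : Finset (Fin 2)))) = {⊤, ⊥} := by
    decide
  have hsum := hκ.map_prod_eq_sum_partCum_of_lt_four two_pos (by norm_num) ![x, y]
  rw [huniv, Finset.sum_pair (by decide), partCum_top two_pos, partCum_bot] at hsum
  simp only [Fin.prod_univ_two, hκ.kappa_one] at hsum
  rw [eq_sub_iff_add_eq]
  simpa using hsum.symm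

theorem MomentCumulant.kappa_two_of_map_right_eq_zero (hκ : MomentCumulant φ κ) (x : A) {y : A}
    (hy : φ y = 0) : κ 2 ![x, y] = φ (x * y) := by
  rw [hκ.kappa_two, hy, mul_zero, sub_zero]

end Cumulants

section ReducedWords

variable {A : Type*} [Ring A] [Algebra ℂ A] {ι : Type*}

/-- A word in the `S i` whose letters are centered for `φ` and whose neighbouring letters come from
different `S i`. A letter is an element of `A` together with the index `i` it is attributed to. -/
structure IsReducedWord (φ : A →ₗ[ℂ] ℂ) (S : ι → Set A) (w : List (ι × A)) : Prop where
  mem : ∀ p ∈ w, p.2 ∈ S p.1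
  centered : ∀ p ∈ w, φ p.2 = 0
  alternating : w.IsChain (fun p q => p.1 ≠ q.1)

namespace IsReducedWord

variable {φ : A →ₗ[ℂ] ℂ} {S : ι → Set A} {w w' : List (ι × A)} {p : ι × A}

theorem of_cons (h : IsReducedWord φ S (p :: w)) : IsReducedWord φ S w where
  mem q hq := h.mem q (List.mem_cons_of_mem p hq)
  centered q hq := h.centered q (List.mem_cons_of_mem p hq)
  alternating := h.alternating.tail

theorem replace_head (h : IsReducedWord φ S (p :: w)) {x : A} (hx : x ∈ S p.1) (hφx : φ x = 0) :
    IsReducedWord φ S ((p.1, x) :: w) where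
  mem := List.forall_mem_cons.2 ⟨hx, h.of_cons.mem⟩
  centered := List.forall_mem_cons.2 ⟨hφx, h.of_cons.centered⟩
  alternating := List.isChain_cons.2 (List.isChain_cons.1 h.alternating)

theorem reverse (h : IsReducedWord φ S w) : IsReducedWord φ S w.reverse where
  mem q hq := h.mem q (List.mem_reverse.1 hq)
  centered q hq := h.centered q (List.mem_reverse.1 hq)
  alternating := List.isChain_reverse.2 (h.alternating.imp fun _ _ => Ne.symm)

theorem append_overlap (h : IsReducedWord φ S (w ++ [p])) (h' : IsReducedWord φ S (p :: w')) :
    IsReducedWord φ S (w ++ p :: w') where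
  mem q hq := (List.mem_append.1 hq).elim (fun hq => h.mem q (List.mem_append_left _ hq)) (h'.mem q)
  centered q hq :=
    (List.mem_append.1 hq).elim (fun hq => h.centered q (List.mem_append_left _ hq))
      (h'.centered q)
  alternating := List.isChain_split.2 ⟨h.alternating, h'.alternating⟩

theorem of_fin {k : ℕ} {a : Fin k → A} {i : Fin k → ι} (hmem : ∀ u, a u ∈ S (i u))
    (hcentered : ∀ u, φ (a u) = 0)
    (halt : ∀ u v : Fin k, (u : ℕ) + 1 = v → i u ≠ i v) :
    IsReducedWord φ S ((List.finRange k).map fun u => (i u, a u)) where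
  mem := by simpa using hmem
  centered := by simpa using hcentered
  alternating := by
    rw [← List.ofFn_eq_map, List.isChain_ofFn]
    exact fun u hu => halt _ _ rfl

variable {κ : ∀ n, MultilinearMap ℂ (fun _ : Fin n => A) ℂ}

theorem map_prod_eq_zero (h : IsReducedWord φ S w) (hw : w ≠ []) (hκ : MomentCumulant φ κ)
    (hfree : FreeIndepCumulant S κ) : φ (w.map Prod.snd).prod = 0 := by
  have hlen : 0 < w.length := List.length_pos_iff.2 hw
  classical
  rw [← List.ofFn_getElem_eq_map, hκ _ hlen]
  refine Finset.sum_eq_zero fun π hπ => ?_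
  rw [partCum_eq_prod_blockCum]
  rcases (Finset.mem_filter.1 hπ).2.exists_singleton_or_succ hlen with
    ⟨u, hu⟩ | ⟨B, hB, u, v, huv, hu, hv⟩
  · refine Finset.prod_eq_zero hu ?_
    rw [blockCum_singleton, hκ.kappa_one]
    exact h.centered _ (List.getElem_mem _)
  · have hmem : ∀ u : Fin w.length, w[u].2 ∈ S w[u].1 := fun u => h.mem _ (List.getElem_mem _)
    refine Finset.prod_eq_zero hB (hfree.blockCum_eq_zero hmem hu hv ?_)
    simpa only [Fin.getElem_fin, huv] using
      List.isChain_iff_getElem.1 h.alternating u (huv ▸ v.isLt)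

end IsReducedWord

variable {φ : A →ₗ[ℂ] ℂ} {κ : ∀ n, MultilinearMap ℂ (fun _ : Fin n => A) ℂ}
  {σ : Type*} [SetLike σ A] [SubringClass σ A] [SMulMemClass σ ℂ A] {Alg : ι → σ}
  {τ : Type*} {i : τ → ι} {b a : τ → A}

theorem FreeIndepCumulant.map_prod_reverse_mul_prod
    (hfree : FreeIndepCumulant (fun j => (Alg j : Set A)) κ) (hκ : MomentCumulant φ κ)
    (hφ1 : φ 1 = 1) {l : List τ}
    (hb : IsReducedWord φ (fun j => (Alg j : Set A)) (l.map fun u => (i u, b u)))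
    (ha : IsReducedWord φ (fun j => (Alg j : Set A)) (l.map fun u => (i u, a u))) :
    φ ((l.map b).reverse.prod * (l.map a).prod) = (l.map fun u => φ (b u * a u)).prod := by
  induction l with
  | nil => simp [hφ1]
  | cons u l ih =>
    set x := (l.map b).reverse.prod with hx
    set y := (l.map a).prod with hy
    set c := b u * a u - φ (b u * a u) • (1 : A) with hc
    have hcmem : c ∈ Alg (i u) :=
      sub_mem (mul_mem (hb.mem _ List.mem_cons_self) (ha.mem _ List.mem_cons_self))
        (SMulMemClass.smul_mem _ (one_mem _))
    have hφc : φ c = 0 := by simp [hc, hφ1]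
    have hword := (hb.replace_head hcmem hφc).reverse
    rw [List.reverse_cons] at hword
    have hzero : φ (x * (c * y)) = 0 := by
      simpa [hx, hy, List.map_reverse, Function.comp_def] using
        (hword.append_overlap (ha.replace_head hcmem hφc)).map_prod_eq_zero (by simp) hκ hfree
    calc φ (((u :: l).map b).reverse.prod * ((u :: l).map a).prod)
        = φ (x * (c * y) + φ (b u * a u) • (x * y)) := by
          congr 1
          simp [hc, ← hx, ← hy, sub_mul, mul_sub, mul_assoc]
      _ = φ (b u * a u) * φ (x * y) := by simp [hzero]
      _ = ((u :: l).map fun u => φ (b u * a u)).prod := by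
          rw [ih hb.of_cons ha.of_cons, List.map_cons, List.prod_cons]

theorem FreeIndepCumulant.kappa_two_prod_reverse_prod
    (hfree : FreeIndepCumulant (fun j => (Alg j : Set A)) κ) (hκ : MomentCumulant φ κ)
    (hφ1 : φ 1 = 1) {l : List τ} (hl : l ≠ [])
    (hb : IsReducedWord φ (fun j => (Alg j : Set A)) (l.map fun u => (i u, b u)))
    (ha : IsReducedWord φ (fun j => (Alg j : Set A)) (l.map fun u => (i u, a u))) :
    κ 2 ![(l.map b).reverse.prod, (l.map a).prod] =
      (l.map fun u => κ 2 ![b u, a u]).prod := by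
  have hprod : φ (l.map a).prod = 0 := by
    simpa [Function.comp_def] using ha.map_prod_eq_zero (by simpa using hl) hκ hfree
  have hletter : ∀ u ∈ l, κ 2 ![b u, a u] = φ (b u * a u) := fun u hu =>
    hκ.kappa_two_of_map_right_eq_zero _ (ha.centered _ (List.mem_map_of_mem hu))
  rw [hκ.kappa_two_of_map_right_eq_zero _ hprod, hfree.map_prod_reverse_mul_prod hκ hφ1 hb ha,
    List.map_congr_left hletter]

end ReducedWords

section Star

theorem star_list_prod {M : Type*} [Monoid M] [StarMul M] (l : List M) :
    star l.prod = (l.map star).reverse.prod := by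
  simpa [Function.comp_def] using unop_map_list_prod (starMulEquiv : M ≃* Mᵐᵒᵖ) l

variable {A : Type*} [Ring A] [Algebra ℂ A] [StarRing A] [StarModule ℂ A]

theorem map_star_of_forall_map_star_mul_self_nonneg {φ : A →ₗ[ℂ] ℂ}
    (hpos : ∀ x : A, 0 ≤ φ (star x * x)) (x : A) : φ (star x) = star (φ x) := by
  have hreal : ∀ y, (φ (star y * y)).im = 0 := fun y => (Complex.nonneg_iff.1 (hpos y)).2.symm
  have hpolar : ∀ z : ℂ, (z * φ x + star z * φ (star x)).im = 0 := fun z => by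
    have hexpand : z * φ x + star z * φ (star x) =
        φ (star (1 + z • x) * (1 + z • x)) - φ (star 1 * 1) - φ (star (z • x) * (z • x)) := by
      simp only [star_add, star_one, star_smul, add_mul, mul_add, one_mul, mul_one, map_add,
        map_smul, smul_eq_mul]
      ring
    simp only [hexpand, Complex.sub_im, hreal, sub_zero]
  have him : (φ x).im + (φ (star x)).im = 0 := by simpa using hpolar 1
  have hre : (φ x).re - (φ (star x)).re = 0 := by simpa [sub_eq_add_neg] using hpolar Complex.I
  apply Complex.ext
  · simpa using (sub_eq_zero.1 hre).symm
  · simpa using eq_neg_of_add_eq_zero_right him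

end Star

/-- **Nonnegativity of the free "variance" of an alternating centered word (Lemma 2,
last part).** Let `(A, φ)` be a `*`-probability space with free cumulants `κ`, and let
`(Alg i)` be unital `*`-subalgebras that are freely independent in the cumulant sense.
Let `a = a_1 ⋯ a_k` with `a_u ∈ Alg (i u)`, all centered, and consecutive indices
distinct. Then `κ_2(a*, a) = ∏_{u=1}^k κ_2(a_u*, a_u)`, and this quantity is a
nonnegative real number. -/
theorem kappa_two_star_word_self
    {A : Type*} [Ring A] [Algebra ℂ A] [StarRing A] [StarModule ℂ A] {ι : Type*}
    (φ : A →ₗ[ℂ] ℂ) (hφ1 : φ 1 = 1)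
    (hpos : ∀ x : A, 0 ≤ φ (star x * x))
    (κ : ∀ n, MultilinearMap ℂ (fun _ : Fin n => A) ℂ)
    (hκ : MomentCumulant φ κ)
    (Alg : ι → StarSubalgebra ℂ A)
    (hfree : FreeIndepCumulant (fun i' => (Alg i' : Set A)) κ)
    (k : ℕ) (hk : 0 < k)
    (a : Fin k → A) (i : Fin k → ι)
    (hamem : ∀ u, a u ∈ Alg (i u)) (hacent : ∀ u, φ (a u) = 0)
    (halt : ∀ u u' : Fin k, (u : ℕ) + 1 = (u' : ℕ) → i u ≠ i u') :
    (κ 2 ![star (List.ofFn a).prod, (List.ofFn a).prod] =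
      ∏ u : Fin k, κ 2 ![star (a u), a u]) ∧
    0 ≤ κ 2 ![star (List.ofFn a).prod, (List.ofFn a).prod] := by
  have hstar_centered : ∀ u, φ (star (a u)) = 0 := fun u => by
    rw [map_star_of_forall_map_star_mul_self_nonneg hpos, hacent, star_zero]
  have hword := IsReducedWord.of_fin (S := fun j => (Alg j : Set A)) hamem hacent halt
  have hstar_word := IsReducedWord.of_fin (S := fun j => (Alg j : Set A))
    (fun u => star_mem (hamem u)) hstar_centered halt
  have hne : List.finRange k ≠ [] := by simpa using hk.ne'
  have hcentered : φ (List.ofFn a).prod = 0 := by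
    simpa [List.ofFn_eq_map, Function.comp_def] using
      hword.map_prod_eq_zero (by simpa using hk.ne') hκ hfree
  constructor
  · simpa [star_list_prod, List.ofFn_eq_map, ← List.prod_ofFn, Function.comp_def] using
      hfree.kappa_two_prod_reverse_prod hκ hφ1 hne hstar_word hword
  · rw [hκ.kappa_two_of_map_right_eq_zero _ hcentered]
    exact hpos _
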